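/- Let K be a reduced simplicial set (K has exactly one 0-simplex). Then the principal twisted cartesian product G(K) ×_τ K, formed with the canonical twisting function τ : K → G(K), is acyclic: its geometric realization |G(K) ×_τ K| is weakly contractible, i.e. all of its homotopy groups are trivial. -/

import Mathlib

open CategoryTheory Simplicial

namespace HopfModel

/-- A map of simplicial sets is a *Kan fibration* if it has the right lifting property
with respect to all horn inclusions `Λ[n, k] ⟶ Δ[n]` for `n ≥ 1`, `0 ≤ k ≤ n`. -/
def IsKanFibration {X Y : SSet} (p : X ⟶ Y) : Prop :=
  ∀ (n : ℕ) (i : Fin (n + 2)), HasLiftingProperty (SSet.horn (n + 1) i).ι p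

/-- The underlying simplicial set of a simplicial group. -/
def uSSet (H : SimplicialObject GrpCat) : SSet := H ⋙ forget GrpCat

/-- The `i`-th face map of a simplicial group, as a group homomorphism. -/
def δHom (H : SimplicialObject GrpCat) {n : ℕ} (i : Fin (n + 2)) :
    (H _⦋n + 1⦌ : Type) →* (H _⦋n⦌ : Type) := (H.δ i).hom

/-- The `i`-th degeneracy map of a simplicial group, as a group homomorphism. -/
def σHom (H : SimplicialObject GrpCat) {n : ℕ} (i : Fin (n + 1)) :
    (H _⦋n⦌ : Type) →* (H _⦋n + 1⦌ : Type) := (H.σ i).hom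

/-- A twisting function `ζ : B → H`, i.e. a family of maps `ζₙ : Bₙ → H_{n-1}` (`n ≥ 1`)
satisfying `∂₀ζ(b) = (ζ(∂₀b))⁻¹·ζ(∂₁b)`, `∂ᵢζ(b) = ζ(∂_{i+1}b)` for `i > 0`,
`sᵢζ(b) = ζ(s_{i+1}b)` for `i ≥ 0`, and `ζ(s₀b) = e`. -/
structure TwistingFunction (B : SSet) (H : SimplicialObject GrpCat) where
  map : ∀ n : ℕ, B _⦋n + 1⦌ → H _⦋n⦌
  map_δ₀ : ∀ (n : ℕ) (b : B _⦋n + 2⦌),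
    H.δ 0 (map (n + 1) b) = (map n (B.δ 0 b))⁻¹ * map n (B.δ 1 b)
  map_δ : ∀ (n : ℕ) (j : Fin (n + 1)) (b : B _⦋n + 2⦌),
    H.δ j.succ (map (n + 1) b) = map n (B.δ j.succ.succ b)
  map_σ : ∀ (n : ℕ) (i : Fin (n + 1)) (b : B _⦋n + 1⦌),
    H.σ i (map n b) = map (n + 1) (B.σ i.succ b)
  map_σ₀ : ∀ (n : ℕ) (b : B _⦋n⦌), map n (B.σ 0 b) = 1

/-- A left action of a simplicial group `H` on a simplicial set `F`:
a degreewise group action commuting with faces and degeneracies. -/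
structure SimplicialAction (H : SimplicialObject GrpCat) (F : SSet) where
  act : ∀ n : ℕ, H _⦋n⦌ → F _⦋n⦌ → F _⦋n⦌
  one_act : ∀ (n : ℕ) (f : F _⦋n⦌), act n 1 f = f
  mul_act : ∀ (n : ℕ) (g h : H _⦋n⦌) (f : F _⦋n⦌),
    act n (g * h) f = act n g (act n h f)
  δ_act : ∀ (n : ℕ) (i : Fin (n + 2)) (g : H _⦋n + 1⦌) (f : F _⦋n + 1⦌),
    F.δ i (act (n + 1) g f) = act n (H.δ i g) (F.δ i f)
  σ_act : ∀ (n : ℕ) (i : Fin (n + 1)) (g : H _⦋n⦌) (f : F _⦋n⦌),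
    F.σ i (act n g f) = act (n + 1) (H.σ i g) (F.σ i f)

/-- A simplicial group acting on (the underlying simplicial set of) itself
by left multiplication. -/
def leftMulAction (H : SimplicialObject GrpCat) : SimplicialAction H (uSSet H) where
  act n g h := g * (show (H _⦋n⦌ : Type) from h)
  one_act n f := one_mul (show (H _⦋n⦌ : Type) from f)
  mul_act n g h f := mul_assoc g h (show (H _⦋n⦌ : Type) from f)
  δ_act n i g f := map_mul (δHom H i) g (show (H _⦋n + 1⦌ : Type) from f)
  σ_act n i g f := map_mul (σHom H i) g (show (H _⦋n⦌ : Type) from f)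

/-- The data exhibiting a simplicial set `P`, together with a map `p : P ⟶ B`, as
the twisted cartesian product `F ×_ζ B` with its projection onto `B`:
`Pₙ ≅ Fₙ × Bₙ`, `∂₀(f,b) = (ζ(b)·∂₀f, ∂₀b)`, `∂ᵢ(f,b) = (∂ᵢf, ∂ᵢb)` for `i > 0`,
`sᵢ(f,b) = (sᵢf, sᵢb)`, and `p(f,b) = b`. -/
structure TCP (H : SimplicialObject GrpCat) (F B : SSet) (A : SimplicialAction H F)
    (ζ : TwistingFunction B H) (P : SSet) (p : P ⟶ B) where
  e : ∀ n : ℕ, P _⦋n⦌ ≃ F _⦋n⦌ × B _⦋n⦌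
  e_δ₀ : ∀ (n : ℕ) (x : P _⦋n + 1⦌),
    e n (P.δ 0 x) =
      (A.act n (ζ.map n (e (n + 1) x).2) (F.δ 0 (e (n + 1) x).1), B.δ 0 (e (n + 1) x).2)
  e_δ : ∀ (n : ℕ) (j : Fin (n + 1)) (x : P _⦋n + 1⦌),
    e n (P.δ j.succ x) = (F.δ j.succ (e (n + 1) x).1, B.δ j.succ (e (n + 1) x).2)
  e_σ : ∀ (n : ℕ) (i : Fin (n + 1)) (x : P _⦋n⦌),
    e (n + 1) (P.σ i x) = (F.σ i (e n x).1, B.σ i (e n x).2)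
  proj : ∀ (n : ℕ) (x : P _⦋n⦌),
    p.app (Opposite.op (SimplexCategory.mk n)) x = (e n x).2

end HopfModel

namespace HopfModel

/-- The relations `s₀x = e` (`x ∈ Kₙ`) defining the loop group `G(K)ₙ`. -/
def loopRels (K : SSet) (n : ℕ) : Set (FreeGroup (K _⦋n + 1⦌)) :=
  Set.range fun x : K _⦋n⦌ => FreeGroup.of (K.σ 0 x)

end HopfModel

/-
Write `P = G ×_τ K`, and let `B = G × Dec K`, where the décalage `Dec K`, with
`(Dec K)ₙ = K_{n+1}`, forgets `∂₀`. The twisting function identities say exactly that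
`π : (g, x) ↦ (τ(x) g, ∂₀ x)` is a simplicial map `B → P`. Read `b ∈ Bₙ` as an edge joining
the vertices `g ∈ Gₙ` and `π b ∈ Pₙ`: since `Gₙ` is free on the non-degenerate letters, this graph
is a tree on `Gₙ ⊔ Pₙ`. The fibres of `B → G` are copies of `Dec K`, which contracts onto the only
vertex of `K`, so when the trees are exhausted by the balls around the base point `(1, k₀)`, each
step enlarges the part of `P` already reached by an anodyne extension. Hence `{(1, k₀)} → P` is
anodyne, and the unit `P → Sing |P|` lifts to the singular complex of the space of based paths in
`|P|`, whose end point map is a Kan fibration. The adjoint `|P| → Path |P|` is a section of the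
path fibration, that is, a contraction of `|P|`.
-/

namespace HopfModel

universe u

open MonoidalCategory SSet HomotopicalAlgebra
open scoped SSet.modelCategoryQuillen

/-- The inclusion of `X` as the end `X × {ε}` of the cylinder `X × Δ[1]`. -/
noncomputable def cylinderEnd (ε : Fin 2) {X : SSet.{u}} : X ⟶ X ⊗ Δ[1] :=
  CartesianMonoidalCategory.lift (𝟙 X) (SSet.const (stdSimplex.obj₀Equiv.{u}.symm ε))

lemma mem_horn_one_iff (ε : Fin 2) {n : SimplexCategoryᵒᵖ} (t : (Δ[1] : SSet.{u}).obj n) :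
    t ∈ (Λ[1, ε] : Subcomplex _).obj n ↔ t = stdSimplex.const 1 ε n := by
  have two_points : ∀ a b c : Fin 2, a ≠ b → c ≠ b → c = a := by decide
  have ne_succ : ∀ a : Fin 2, a ≠ a + 1 := by decide
  rw [mem_horn_iff, Ne, Set.eq_univ_iff_forall]
  constructor
  · intro h
    push Not at h
    obtain ⟨j, hj⟩ := h
    rw [Set.mem_union, not_or] at hj
    refine stdSimplex.objEquiv.injective ?_
    ext k : 3
    exact two_points _ j _ (fun h => hj.2 h.symm) fun h => hj.1 ⟨k, h⟩
  · rintro rfl h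
    obtain ⟨_, hk⟩ | hk := h (ε + 1)
    · exact ne_succ ε hk
    · exact ne_succ ε hk.symm

theorem exists_homotopy_lift (ε : Fin 2) {Z X S : SSet.{u}} (Z' : Z.Subcomplex) (p : X ⟶ S)
    [Fibration p] (V : Z ⊗ Δ[1] ⟶ S) (φ : (Z' : SSet) ⊗ Δ[1] ⟶ X) (ψ : Z ⟶ X)
    (hφ : φ ≫ p = Z'.ι ▷ Δ[1] ≫ V) (hψ : ψ ≫ p = cylinderEnd ε ≫ V)
    (hφψ : cylinderEnd ε ≫ φ = Z'.ι ≫ ψ) :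
    ∃ L : Z ⊗ Δ[1] ⟶ X, Z'.ι ▷ Δ[1] ≫ L = φ ∧ cylinderEnd ε ≫ L = ψ ∧ L ≫ p = V := by
  let e : Z ⟶ Z ⊗ Λ[1, ε] := CartesianMonoidalCategory.lift (𝟙 Z)
    (SSet.const ⟨stdSimplex.obj₀Equiv.symm ε, (mem_horn_one_iff ε _).2 rfl⟩)
  have fst_e : CartesianMonoidalCategory.fst Z (Λ[1, ε] : SSet.{u}) ≫ cylinderEnd ε =
      Z ◁ Λ[1, ε].ι := by
    refine CartesianMonoidalCategory.hom_ext _ _ rfl ?_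
    ext n ⟨z, t, ht⟩
    exact ((mem_horn_one_iff ε t).1 ht).symm
  have sq := Subcomplex.unionProd.isPushout Z' Λ[1, ε]
  obtain ⟨g, hg₁, hg₂⟩ := sq.exists_desc (CartesianMonoidalCategory.fst _ _ ≫ ψ) φ <| by
    ext n ⟨z, t, ht⟩
    obtain rfl := (mem_horn_one_iff ε t).1 ht
    exact (ConcreteCategory.congr_hom (NatTrans.congr_app hφψ n) z).symm
  have := anodyneExtensions_unionProd_ι Z' Λ[1, ε] (anodyneExtensions.horn_ι ε) p (mem_fibrations p)
  have sq' : CommSq g (Z'.unionProd Λ[1, ε]).ι p V := ⟨sq.hom_ext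
    ((by rw [reassoc_of% hg₁, hψ, reassoc_of% fst_e]) : _ = Z ◁ Λ[1, ε].ι ≫ V)
    ((by rw [reassoc_of% hg₂, hφ]) : _ = Z'.ι ▷ Δ[1] ≫ V)⟩
  obtain ⟨L, hL, hLp⟩ : ∃ L, (Z'.unionProd Λ[1, ε]).ι ≫ L = g ∧ L ≫ p = V :=
    ⟨sq'.lift, sq'.fac_left, sq'.fac_right⟩
  refine ⟨L, ?_, ?_, hLp⟩
  · rw [← hg₂, ← hL]; rfl
  · calc cylinderEnd ε ≫ L = e ≫ Subcomplex.unionProd.ι₁ Z' Λ[1, ε] ≫ g := by rw [← hL]; rfl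
      _ = ψ := by rw [hg₁]; rfl

/-- A deformation of the fibres of `r : B ⟶ Y` onto the image of a section of `r`. -/
structure FiberwiseContraction {B Y : SSet.{u}} (r : B ⟶ Y) where
  /-- the section onto which the fibres are contracted -/
  sec : Y ⟶ B
  /-- the homotopy from `r ≫ sec` to the identity -/
  htpy : B ⊗ Δ[1] ⟶ B
  sec_comp : sec ≫ r = 𝟙 Y
  htpy_comp : htpy ≫ r = CartesianMonoidalCategory.fst _ _ ≫ r
  htpy_zero : cylinderEnd 0 ≫ htpy = r ≫ sec
  htpy_one : cylinderEnd 1 ≫ htpy = 𝟙 B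

namespace FiberwiseContraction

variable {B Y : SSet.{u}} {r : B ⟶ Y} (c : FiberwiseContraction r)

lemma apply_sec {n : SimplexCategoryᵒᵖ} (y : Y.obj n) : r.app n (c.sec.app n y) = y :=
  ConcreteCategory.congr_hom (NatTrans.congr_app c.sec_comp n) y

lemma apply_htpy {n : SimplexCategoryᵒᵖ} (x : (B ⊗ Δ[1] : SSet.{u}).obj n) :
    r.app n (c.htpy.app n x) = r.app n x.1 :=
  ConcreteCategory.congr_hom (NatTrans.congr_app c.htpy_comp n) x

/-- The restriction of a fibrewise contraction to the part lying over a subcomplex of the base. -/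
def restrict (Y₁ : Y.Subcomplex) : FiberwiseContraction (Y₁.fromPreimage r) where
  sec := Subcomplex.lift (Y₁.ι ≫ c.sec) <| by
    rintro n _ ⟨y, rfl⟩
    exact (congrArg (· ∈ Y₁.obj n) (c.apply_sec y.1)).mpr y.2
  htpy := Subcomplex.lift ((Y₁.preimage r).ι ▷ Δ[1] ≫ c.htpy) <| by
    rintro n _ ⟨x, rfl⟩
    exact (congrArg (· ∈ Y₁.obj n) (c.apply_htpy _)).mpr x.1.2
  sec_comp := by
    rw [← cancel_mono Y₁.ι]
    exact Y₁.ι ≫= c.sec_comp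
  htpy_comp := by
    rw [← cancel_mono Y₁.ι]
    exact (Y₁.preimage r).ι ▷ Δ[1] ≫= c.htpy_comp
  htpy_zero := by
    rw [← cancel_mono (Y₁.preimage r).ι]
    exact (Y₁.preimage r).ι ≫= c.htpy_zero
  htpy_one := by
    rw [← cancel_mono (Y₁.preimage r).ι]
    exact (Y₁.preimage r).ι ≫= c.htpy_one

end FiberwiseContraction

/-- `q : C ⟶ D` is a relative isomorphism `(C, q⁻¹ D') ⟶ (D, D')`. -/
structure IsRelIso {C D : SSet.{u}} (q : C ⟶ D) (D' : D.Subcomplex) : Prop where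
  surjective : ∀ {n} (d : D.obj n), d ∈ D'.obj n ∨ ∃ c, q.app n c = d
  injective : ∀ {n} (c c' : C.obj n), q.app n c = q.app n c' → c = c' ∨ q.app n c ∈ D'.obj n

theorem IsRelIso.isPushout {C D : SSet.{u}} {q : C ⟶ D} {D' : D.Subcomplex} (h : IsRelIso q D') :
    IsPushout (D'.fromPreimage q) (D'.preimage q).ι D'.ι q where
  w := rfl
  isColimit' := ⟨Limits.evaluationJointlyReflectsColimits _ fun n =>
    (Limits.isColimitMapCoconePushoutCoconeEquiv _ _).symm <| IsPushout.isColimit <| by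
      refine Limits.Types.isPushout_of_isPullback_of_mono' ?_ ?_ fun c c' hc _ e => ?_
      · refine (Limits.Types.isPullback_iff _ _ _ _).2 ⟨rfl, fun x y hxy => Subtype.ext hxy.2,
          fun d c hdc => ⟨⟨c, ?_⟩, Subtype.ext hdc.symm, rfl⟩⟩
        exact (congrArg (· ∈ D'.obj n) hdc).mp d.2
      · refine Set.eq_univ_of_forall fun d => ?_
        exact (h.surjective d).imp (fun hd => ⟨⟨d, hd⟩, rfl⟩) id
      · exact (h.injective c c' e).resolve_right fun hq => hc ⟨⟨c, hq⟩, rfl⟩⟩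

theorem IsRelIso.anodyneExtensions {C D : SSet.{u}} {q : C ⟶ D} {D' : D.Subcomplex}
    (h : IsRelIso q D') (hC : anodyneExtensions (D'.preimage q).ι) : anodyneExtensions D'.ι :=
  MorphismProperty.of_isPushout h.isPushout hC

theorem FiberwiseContraction.anodyneExtensions {B Y : SSet.{u}} {r : B ⟶ Y}
    (c : FiberwiseContraction r) {A : B.Subcomplex} {Y' : Y.Subcomplex}
    (hA : Y'.preimage r ≤ A) (hr : IsRelIso (A.ι ≫ r) Y') : anodyneExtensions A.ι := by
  intro X S p hp
  rw [← fibration_iff] at hp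
  refine ⟨fun {u v} sq => ?_⟩
  let A' : (A : SSet.{u}).Subcomplex := Y'.preimage (A.ι ≫ r)
  let φ : (A' : SSet.{u}) ⊗ Δ[1] ⟶ (A : SSet.{u}) :=
    (Y'.preimage r).fromPreimage A.ι ▷ Δ[1] ≫ (c.restrict Y').htpy ≫ Subcomplex.homOfLE hA
  let s : (Y' : SSet.{u}) ⟶ (A : SSet.{u}) := (c.restrict Y').sec ≫ Subcomplex.homOfLE hA
  have φ_one : cylinderEnd 1 ≫ φ = A'.ι :=
    (cancel_mono A.ι).1 (A'.ι ≫= A.ι ≫= c.htpy_one)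
  have φ_zero : cylinderEnd 0 ≫ φ = Y'.fromPreimage (A.ι ≫ r) ≫ s :=
    (cancel_mono A.ι).1 (A'.ι ≫= A.ι ≫= c.htpy_zero)
  obtain ⟨L₁, hL₁φ, hL₁u, hL₁p⟩ :=
    exists_homotopy_lift 1 A' p (A.ι ▷ Δ[1] ≫ c.htpy ≫ v) (φ ≫ u) u
      (by rw [Category.assoc, sq.w]; rfl)
      (by rw [sq.w]; exact A.ι ≫= c.htpy_one.symm =≫ v)
      (by rw [reassoc_of% φ_one])
  obtain ⟨w, hwY', hwA⟩ := hr.isPushout.exists_desc (s ≫ u) (cylinderEnd 0 ≫ L₁) <| by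
    calc Y'.fromPreimage (A.ι ≫ r) ≫ s ≫ u = cylinderEnd 0 ≫ φ ≫ u := by rw [reassoc_of% φ_zero]
      _ = A'.ι ≫ cylinderEnd 0 ≫ L₁ := by rw [← hL₁φ]; rfl
  have hwp : w ≫ p = c.sec ≫ v := hr.isPushout.hom_ext
    (by rw [reassoc_of% hwY', sq.w]; rfl)
    (by
      rw [← Category.assoc, hwA, Category.assoc, hL₁p]
      exact A.ι ≫= c.htpy_zero =≫ v)
  obtain ⟨L₂, hL₂A, -, hL₂p⟩ := exists_homotopy_lift 0 A p (c.htpy ≫ v) L₁ (r ≫ w)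
    hL₁p (by rw [Category.assoc, hwp]; exact c.htpy_zero.symm =≫ v) hwA.symm
  refine ⟨⟨cylinderEnd 1 ≫ L₂, ?_, ?_⟩⟩
  · rw [← hL₁u, ← hL₂A]; rfl
  · rw [Category.assoc, hL₂p]
    exact c.htpy_one =≫ v

theorem anodyneExtensions_ι_of_iSup_eq_top {X : SSet.{u}} {E : ℕ → X.Subcomplex} (hE : Monotone E)
    (hE' : ∀ k, anodyneExtensions (Subcomplex.homOfLE (hE (Nat.le_succ k)))) (h : ⨆ k, E k = ⊤) :
    anodyneExtensions (E 0).ι :=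
  MorphismProperty.transfiniteCompositionsOfShape_le anodyneExtensions ℕ _ <|
    MorphismProperty.TransfiniteCompositionOfShape.mem _
    { F := hE.functor ⋙ Subcomplex.toSSetFunctor
      isoBot := Iso.refl _
      incl := { app := fun k => (E k).ι }
      isColimit :=
        (Limits.isColimitOfPreserves Subcomplex.toSSetFunctor
          (Preorder.colimitCoconeOfIsLUB hE.functor (pt := ⊤)
            (by rw [← h]; exact isLUB_iSup)).isColimit).ofIsoColimit
          (Limits.Cocone.ext (Subcomplex.topIso _))
      map_mem := fun k _ => hE' k }

lemma anodyneExtensions_homOfLE {X : SSet.{u}} {E E' : X.Subcomplex} (h : E ≤ E')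
    (hE : anodyneExtensions (E.preimage E'.ι).ι) : anodyneExtensions (Subcomplex.homOfLE h) :=
  (anodyneExtensions.arrow_mk_iso_iff (Arrow.isoMk
    { hom := Subcomplex.lift (Subcomplex.homOfLE h) (by rintro n _ ⟨x, rfl⟩; exact x.2)
      inv := E.fromPreimage E'.ι } (Iso.refl _))).2 hE

section Forest

variable {B Y P : SSet.{u}} (f : B ⟶ Y) (π : B ⟶ P) (E₀ : P.Subcomplex)

/-- For a span `Y ← B → P`, whose simplices are read as the edges of bipartite graphs on
`Yₙ ⊔ Pₙ`: the vertices in `P` at distance at most `2k` from `E₀`. -/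
def forestLayer (k : ℕ) : P.Subcomplex :=
  match k with
  | 0 => E₀
  | k + 1 => forestLayer k ⊔ ((((forestLayer k).preimage π).image f).preimage f).image π

/-- The vertices in `Y` at distance less than `2k` from `E₀`. -/
def forestInnerLayer (k : ℕ) : Y.Subcomplex :=
  match k with
  | 0 => ⊥
  | k + 1 => ((forestLayer f π E₀ k).preimage π).image f

/-- In every degree the edges `B` form a forest on the vertices `Y ⊔ P`, with roots `E₀` and with
`parent y` the first edge on the way from `y` to its root. -/
structure IsRootedForest (parent : ∀ {n}, Y.obj n → B.obj n) : Prop where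
  parent_of_mem_root : ∀ {n} (b : B.obj n), π.app n b ∈ E₀.obj n → parent (f.app n b) = b
  injective : ∀ {n} (b b' : B.obj n), π.app n b = π.app n b' →
    b = b' ∨ parent (f.app n b) = b ∨ parent (f.app n b') = b'

lemma monotone_forestLayer : Monotone (forestLayer f π E₀) :=
  monotone_nat_of_le_succ fun _ => le_sup_left

variable {f π E₀}

lemma mem_forestLayer_succ {k : ℕ} {n : SimplexCategoryᵒᵖ} {b : B.obj n}
    (hb : f.app n b ∈ (forestInnerLayer f π E₀ (k + 1)).obj n) :
    π.app n b ∈ (forestLayer f π E₀ (k + 1)).obj n :=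
  Or.inr ⟨b, hb, rfl⟩

lemma mem_forestInnerLayer_succ {k : ℕ} {n : SimplexCategoryᵒᵖ} {b : B.obj n}
    (hb : π.app n b ∈ (forestLayer f π E₀ k).obj n) :
    f.app n b ∈ (forestInnerLayer f π E₀ (k + 1)).obj n :=
  ⟨b, hb, rfl⟩

lemma preimage_forestInnerLayer_le (k : ℕ) :
    (forestInnerLayer f π E₀ k).preimage f ≤ (forestLayer f π E₀ k).preimage π := by
  intro n b hb
  cases k with
  | zero => exact hb.elim
  | succ k => exact mem_forestLayer_succ hb

lemma range_le_forestLayer_succ (k : ℕ) :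
    Subcomplex.range (((forestInnerLayer f π E₀ (k + 1)).preimage f).ι ≫ π) ≤
      forestLayer f π E₀ (k + 1) := by
  rintro n _ ⟨b, rfl⟩
  exact mem_forestLayer_succ b.2

namespace IsRootedForest

variable {parent : ∀ {n}, Y.obj n → B.obj n} (h : IsRootedForest f π E₀ parent)
include h

lemma parent_eq_or_mem_innerLayer_and_parent_mem_layer (k : ℕ) (n : SimplexCategoryᵒᵖ) :
    (∀ b : B.obj n, π.app n b ∈ (forestLayer f π E₀ k).obj n →
      parent (f.app n b) = b ∨ f.app n b ∈ (forestInnerLayer f π E₀ k).obj n) ∧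
    ∀ y ∈ (forestInnerLayer f π E₀ (k + 1)).obj n,
      π.app n (parent y) ∈ (forestLayer f π E₀ k).obj n := by
  have parent_mem {k : ℕ}
      (h₁ : ∀ b : B.obj n, π.app n b ∈ (forestLayer f π E₀ k).obj n →
        parent (f.app n b) = b ∨ f.app n b ∈ (forestInnerLayer f π E₀ k).obj n)
      (h₂ : ∀ y ∈ (forestInnerLayer f π E₀ k).obj n,
        π.app n (parent y) ∈ (forestLayer f π E₀ k).obj n) :
      ∀ y ∈ (forestInnerLayer f π E₀ (k + 1)).obj n,
        π.app n (parent y) ∈ (forestLayer f π E₀ k).obj n := by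
    rintro _ ⟨b, hb, rfl⟩
    obtain hb' | hb' := h₁ b hb
    · rwa [hb']
    · exact h₂ _ hb'
  induction k with
  | zero =>
    have h₁ (b : B.obj n) (hb : π.app n b ∈ E₀.obj n) :
        parent (f.app n b) = b ∨ f.app n b ∈ (forestInnerLayer f π E₀ 0).obj n :=
      Or.inl (h.parent_of_mem_root b hb)
    exact ⟨h₁, parent_mem h₁ fun _ hy => hy.elim⟩
  | succ k ih =>
    have ih₂ := ih.2
    have h₁ (b : B.obj n) (hb : π.app n b ∈ (forestLayer f π E₀ (k + 1)).obj n) :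
        parent (f.app n b) = b ∨ f.app n b ∈ (forestInnerLayer f π E₀ (k + 1)).obj n := by
      obtain hb | ⟨c, hc, hcb⟩ := hb
      · exact Or.inr (mem_forestInnerLayer_succ hb)
      · obtain rfl | hc' | hb' := h.injective c b hcb
        · exact Or.inr hc
        · refine Or.inr (mem_forestInnerLayer_succ ?_)
          rw [← hcb, ← hc']
          exact ih₂ _ hc
        · exact Or.inl hb'
    exact ⟨h₁, parent_mem h₁ fun y hy => monotone_forestLayer f π E₀ k.le_succ n (ih₂ y hy)⟩

lemma parent_eq_or_mem_innerLayer {k : ℕ} {n : SimplexCategoryᵒᵖ} (b : B.obj n)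
    (hb : π.app n b ∈ (forestLayer f π E₀ k).obj n) :
    parent (f.app n b) = b ∨ f.app n b ∈ (forestInnerLayer f π E₀ k).obj n :=
  (h.parent_eq_or_mem_innerLayer_and_parent_mem_layer k n).1 b hb

lemma parent_mem_layer {k : ℕ} {n : SimplexCategoryᵒᵖ} {y : Y.obj n}
    (hy : y ∈ (forestInnerLayer f π E₀ (k + 1)).obj n) :
    π.app n (parent y) ∈ (forestLayer f π E₀ k).obj n :=
  (h.parent_eq_or_mem_innerLayer_and_parent_mem_layer k n).2 y hy

lemma isRelIso_inner (k : ℕ) :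
    IsRelIso (((forestLayer f π E₀ k).preimage
        (((forestInnerLayer f π E₀ (k + 1)).preimage f).ι ≫ π)).ι ≫
      (forestInnerLayer f π E₀ (k + 1)).fromPreimage f)
    ((forestInnerLayer f π E₀ k).preimage (forestInnerLayer f π E₀ (k + 1)).ι) where
  surjective := by
    rintro n ⟨_, b, hb, rfl⟩
    exact Or.inr ⟨⟨⟨b, mem_forestInnerLayer_succ hb⟩, hb⟩, rfl⟩
  injective := by
    rintro n ⟨⟨b, _⟩, hb⟩ ⟨⟨c, _⟩, hc⟩ hbc
    have hbc : f.app n b = f.app n c := congrArg Subtype.val hbc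
    obtain hb' | hb' := h.parent_eq_or_mem_innerLayer b hb
    · obtain hc' | hc' := h.parent_eq_or_mem_innerLayer c hc
      · exact Or.inl (Subtype.ext (Subtype.ext (hb'.symm.trans ((congrArg _ hbc).trans hc'))))
      · exact Or.inr ((congrArg (· ∈ (forestInnerLayer f π E₀ k).obj n) hbc).mpr hc')
    · exact Or.inr hb'

lemma isRelIso_layer (k : ℕ) :
    IsRelIso (Subcomplex.lift (((forestInnerLayer f π E₀ (k + 1)).preimage f).ι ≫ π)
        (range_le_forestLayer_succ k))
      ((forestLayer f π E₀ k).preimage (forestLayer f π E₀ (k + 1)).ι) where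
  surjective := by
    rintro n ⟨_, hx | ⟨b, hb, rfl⟩⟩
    · exact Or.inl hx
    · exact Or.inr ⟨⟨b, hb⟩, rfl⟩
  injective := by
    rintro n ⟨b, hb⟩ ⟨c, hc⟩ hbc
    have hbc : π.app n b = π.app n c := congrArg Subtype.val hbc
    obtain rfl | hb' | hc' := h.injective b c hbc
    · exact Or.inl rfl
    · right
      have := h.parent_mem_layer hb
      rwa [hb'] at this
    · right
      have := h.parent_mem_layer hc
      rwa [hc', ← hbc] at this

theorem anodyneExtensions (c : FiberwiseContraction f) (hE : ⨆ k, forestLayer f π E₀ k = ⊤) :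
    anodyneExtensions E₀.ι := by
  refine anodyneExtensions_ι_of_iSup_eq_top (monotone_forestLayer f π E₀) (fun k => ?_) hE
  refine anodyneExtensions_homOfLE _ ((h.isRelIso_layer k).anodyneExtensions ?_)
  exact (c.restrict (forestInnerLayer f π E₀ (k + 1))).anodyneExtensions
    (fun n b hb => preimage_forestInnerLayer_le k n hb) (h.isRelIso_inner k)

end IsRootedForest

end Forest

section HomotopyGroups

open unitInterval

variable {N X : Type*}

/-- The self-map of the cube that stretches it by the factor `1 + 2 w` about its centre and clamps
the result to the cube. -/
noncomputable def cubeStretch (w : I) (s : N → I) : N → I :=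
  fun i => Set.projIcc (0 : ℝ) 1 zero_le_one ((1 + 2 * w) * s i - w)

@[fun_prop]
lemma continuous_cubeStretch : Continuous fun q : I × (N → I) => cubeStretch q.1 q.2 :=
  continuous_pi fun i => continuous_projIcc.comp (by fun_prop)

lemma cubeStretch_zero (s : N → I) : cubeStretch 0 s = s := by
  funext i
  simp [cubeStretch]

lemma cubeStretch_apply_eq_zero {w : I} {s : N → I} {i : N} (h : (1 + 2 * w) * s i ≤ (w : ℝ)) :
    cubeStretch w s i = 0 :=
  Set.projIcc_of_le_left _ (sub_nonpos.2 h)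

lemma cubeStretch_apply_eq_one {w : I} {s : N → I} {i : N}
    (h : 1 + w ≤ (1 + 2 * w) * (s i : ℝ)) : cubeStretch w s i = 1 :=
  Set.projIcc_of_right_le _ (le_sub_iff_add_le.2 h)

lemma cubeStretch_mem_boundary (w : I) {s : N → I} (hs : s ∈ Cube.boundary N) :
    cubeStretch w s ∈ Cube.boundary N := by
  have hw : (0 : ℝ) ≤ w := w.2.1
  obtain ⟨i, hi | hi⟩ := hs
  · exact ⟨i, Or.inl (cubeStretch_apply_eq_zero (by simpa [hi] using hw))⟩
  · exact ⟨i, Or.inr (cubeStretch_apply_eq_one (by simp [hi]; linarith))⟩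

/-- A cut-off function on the cube: it vanishes on the boundary and equals `1` wherever
`cubeStretch 1` does not take values in the boundary. -/
noncomputable def cubeBump [Fintype N] (s : N → I) : I :=
  ∏ i, Set.projIcc (0 : ℝ) 1 zero_le_one (3 * min (s i : ℝ) (1 - s i))

@[fun_prop]
lemma continuous_cubeBump [Fintype N] : Continuous (cubeBump (N := N)) :=
  continuous_finsetProd _ fun i _ => continuous_projIcc.comp (by fun_prop)

lemma cubeBump_eq_zero [Fintype N] {s : N → I} (hs : s ∈ Cube.boundary N) : cubeBump s = 0 := by
  obtain ⟨i, hi⟩ := hs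
  refine Finset.prod_eq_zero (Finset.mem_univ i) (Set.projIcc_of_le_left _ ?_)
  rcases hi with hi | hi <;> simp [hi]

lemma cubeBump_eq_one_or_mem_boundary [Fintype N] (s : N → I) :
    cubeBump s = 1 ∨ cubeStretch 1 s ∈ Cube.boundary N := by
  by_cases h : ∀ i, 1 ≤ 3 * min (s i : ℝ) (1 - s i)
  · exact Or.inl (Finset.prod_eq_one fun i _ => Set.projIcc_of_right_le _ (h i))
  · push Not at h
    obtain ⟨i, hi⟩ := h
    refine Or.inr ⟨i, ?_⟩
    rcases le_total (s i : ℝ) (1 - s i) with hle | hle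
    · rw [min_eq_left hle] at hi
      exact Or.inl (cubeStretch_apply_eq_zero (by norm_num; linarith))
    · rw [min_eq_right hle] at hi
      exact Or.inr (cubeStretch_apply_eq_one (by norm_num; linarith))

variable [TopologicalSpace X]

lemma genLoop_homotopic {x : X} {f g : GenLoop N X x} (F : C(I × (N → I), X))
    (h0 : ∀ s, F (0, s) = f s) (h1 : ∀ s, F (1, s) = g s)
    (hF : ∀ t, ∀ s ∈ Cube.boundary N, F (t, s) = x) : GenLoop.Homotopic f g :=
  ⟨⟨⟨F, h0, h1⟩, fun t s hs => (hF t s hs).trans (f.2 s hs).symm⟩⟩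

/-- A null-homotopy of the identity drags the base point `x` along a path, so the loop obtained by
applying it is only constant away from the boundary: there it runs back and forth along the path. -/
theorem genLoop_homotopic_const [Finite N] [ContractibleSpace X] {x : X} (γ : GenLoop N X x) :
    GenLoop.Homotopic γ GenLoop.const := by
  have := Fintype.ofFinite N
  obtain ⟨x₀, ⟨H⟩⟩ := id_nullhomotopic X
  have H_zero (y : X) : H (0, y) = y := H.apply_zero y
  have H_one (y : X) : H (1, y) = x₀ := H.apply_one y
  let trace : GenLoop N X x :=
    ⟨⟨fun s => H (cubeBump s, x), by fun_prop⟩, fun s hs => by simp [cubeBump_eq_zero hs, H_zero]⟩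
  have trace_apply (s : N → I) : trace s = H (cubeBump s, x) := rfl
  have hγ : GenLoop.Homotopic γ trace := by
    refine genLoop_homotopic
      ⟨fun q => H (q.1 * cubeBump q.2, γ (cubeStretch q.1 q.2)), by fun_prop⟩
      (fun s => by simp [cubeStretch_zero, H_zero]) (fun s => ?_) (fun t s hs => ?_)
    · obtain hs | hs := cubeBump_eq_one_or_mem_boundary s
      · simp [trace_apply, hs, H_one]
      · simp [trace_apply, GenLoop.boundary γ _ hs]
    · simpa [cubeBump_eq_zero hs, H_zero] using γ.2 _ (cubeStretch_mem_boundary t hs)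
  have htrace : GenLoop.Homotopic trace GenLoop.const :=
    genLoop_homotopic ⟨fun q => H (σ q.1 * cubeBump q.2, x), by fun_prop⟩
      (fun s => by simp [trace_apply]) (fun s => by simp [H_zero])
      (fun t s hs => by simp [cubeBump_eq_zero hs, H_zero])
  exact hγ.trans htrace

lemma subsingleton_homotopyGroup [Finite N] [ContractibleSpace X] (x : X) :
    Subsingleton (HomotopyGroup N X x) :=
  ⟨Quotient.ind₂ fun γ γ' => Quotient.sound
    ((genLoop_homotopic_const γ).trans (genLoop_homotopic_const γ').symm)⟩

end HomotopyGroups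

section TopologicalHorn

variable {ι κ : Type*} [Fintype ι] [Fintype κ]

lemma stdSimplexMap_apply {f : ι → κ} (hf : Function.Injective f) (z : stdSimplex ℝ ι) (c : ι) :
    stdSimplex.map f z (f c) = z c := by
  classical
  rw [stdSimplex.map_coe, FunOnFinite.linearMap_apply_apply]
  simp [hf.eq_iff, Finset.sum_filter]

lemma stdSimplexMap_apply_of_notMem_range {f : ι → κ} (z : stdSimplex ℝ ι) {d : κ}
    (hd : d ∉ Set.range f) : stdSimplex.map f z d = 0 := by
  classical
  rw [stdSimplex.map_coe, FunOnFinite.linearMap_apply_apply]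
  exact Finset.sum_eq_zero fun c hc => (hd ⟨c, (Finset.mem_filter.1 hc).2⟩).elim

lemma stdSimplexMap_injective {f : ι → κ} (hf : Function.Injective f) :
    Function.Injective (stdSimplex.map (S := ℝ) f) := fun z w h => by
  ext c
  rw [← stdSimplexMap_apply hf, h, stdSimplexMap_apply hf]

lemma stdSimplexMap_succAbove_apply_self {n : ℕ} (j : Fin (n + 1)) (z : stdSimplex ℝ (Fin n)) :
    stdSimplex.map j.succAbove z j = 0 :=
  stdSimplexMap_apply_of_notMem_range z (by simp)

lemma exists_stdSimplexMap_succAbove_eq {n : ℕ} {j : Fin (n + 1)} {y : stdSimplex ℝ (Fin (n + 1))}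
    (hy : y j = 0) : ∃ z, stdSimplex.map j.succAbove z = y := by
  refine ⟨⟨fun c => y (j.succAbove c), fun c => stdSimplex.zero_le y _, ?_⟩, ?_⟩
  · simpa [Fin.sum_univ_succAbove _ j, hy] using stdSimplex.sum_eq_one y
  · ext d
    obtain rfl | ⟨c, rfl⟩ := Fin.eq_self_or_eq_succAbove j d
    · rw [stdSimplexMap_succAbove_apply_self, hy]
    · exact stdSimplexMap_apply Fin.succAbove_right_injective _ c

lemma exists_common_face {m : ℕ} {j k : Fin (m + 3)} (hjk : j < k)
    {z w : stdSimplex ℝ (Fin (m + 2))}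
    (hzw : stdSimplex.map j.succAbove z = stdSimplex.map k.succAbove w) :
    ∃ u, stdSimplex.map (k.pred (Fin.ne_zero_of_lt hjk)).succAbove u = z ∧
      stdSimplex.map (j.castPred (Fin.ne_last_of_lt hjk)).succAbove u = w := by
  obtain ⟨j, rfl⟩ := j.eq_castSucc_of_ne_last (Fin.ne_last_of_lt hjk)
  obtain ⟨k, rfl⟩ := k.eq_succ_of_ne_zero (Fin.ne_zero_of_lt hjk)
  have hz : z k = 0 := by
    rw [← stdSimplexMap_apply (Fin.succAbove_right_injective (p := j.castSucc)) z k,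
      Fin.succAbove_of_le_castSucc _ _ (Fin.le_castSucc_iff.2 hjk), hzw,
      stdSimplexMap_succAbove_apply_self]
  obtain ⟨u, rfl⟩ := exists_stdSimplexMap_succAbove_eq hz
  refine ⟨u, rfl, stdSimplexMap_injective (Fin.succAbove_right_injective (p := k.succ)) ?_⟩
  rw [← hzw, stdSimplex.map_comp_apply, stdSimplex.map_comp_apply]
  congr 1
  funext c
  exact congrArg (fun f => f.toOrderHom c)
    (SimplexCategory.δ_comp_δ (Fin.castSucc_lt_succ_iff.1 hjk))

/-- The topological horn: the union of the facets of the standard simplex containing the vertex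
`i`. -/
def topHorn (i : ι) : Set (stdSimplex ℝ ι) :=
  {y | ∃ j ≠ i, y j = 0}

/-- The parametrization of the topological horn by its facets. -/
noncomputable def topHornFacets {m : ℕ} (i : Fin (m + 1)) :
    C(Σ _ : {j // j ≠ i}, stdSimplex ℝ (Fin m), topHorn i) where
  toFun s := ⟨stdSimplex.map s.1.1.succAbove s.2, s.1, s.1.2,
    stdSimplexMap_succAbove_apply_self _ _⟩
  continuous_toFun :=
    Continuous.subtype_mk (continuous_sigma fun j => stdSimplex.continuous_map j.1.succAbove) _

lemma surjective_topHornFacets {m : ℕ} (i : Fin (m + 1)) :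
    Function.Surjective (topHornFacets i) := by
  rintro ⟨y, j, hj, hy⟩
  obtain ⟨z, hz⟩ := exists_stdSimplexMap_succAbove_eq hy
  exact ⟨⟨⟨j, hj⟩, z⟩, Subtype.ext hz⟩

lemma isQuotientMap_topHornFacets {m : ℕ} (i : Fin (m + 1)) :
    Topology.IsQuotientMap (topHornFacets i) :=
  .of_surjective_continuous (surjective_topHornFacets i) (topHornFacets i).continuous

end TopologicalHorn

section MooreDeformation

variable {T : Type*} [TopologicalSpace T] {S : Set T}

/-- A strong deformation retraction of `T` into `S` along Moore paths: the path starting at `b` is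
traversed during the time interval `[0, length b]`. -/
structure MooreDeformation (S : Set T) where
  /-- the duration of the path through a point -/
  length : C(T, ℝ)
  /-- the position of a point after some time -/
  flow : C(T × ℝ, T)
  length_nonneg (b : T) : 0 ≤ length b
  length_eq_zero {b : T} : b ∈ S → length b = 0
  flow_zero (b : T) : flow (b, 0) = b
  flow_length_mem (b : T) : flow (b, length b) ∈ S

section Horn

variable {ι : Type*} [Fintype ι] [DecidableEq ι] [Nontrivial ι] (i : ι)

lemma erase_univ_nonempty : (Finset.univ.erase i).Nonempty :=
  (exists_ne i).imp fun j hj => Finset.mem_erase_of_ne_of_mem hj (Finset.mem_univ j)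

/-- The least barycentric coordinate other than the `i`-th one. -/
noncomputable def minCoord : C(stdSimplex ℝ ι, ℝ) where
  toFun y := (Finset.univ.erase i).inf' (erase_univ_nonempty i) fun j => y j
  continuous_toFun := Continuous.finset_inf'_apply _ fun j _ =>
    (continuous_apply j).comp continuous_subtype_val

variable {i}

lemma minCoord_nonneg (y : stdSimplex ℝ ι) : 0 ≤ minCoord i y :=
  Finset.le_inf' (erase_univ_nonempty i) _ fun j _ => stdSimplex.zero_le y j

lemma minCoord_le (y : stdSimplex ℝ ι) {j : ι} (hj : j ≠ i) : minCoord i y ≤ y j :=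
  Finset.inf'_le _ (by simpa using hj)

lemma exists_minCoord_eq (y : stdSimplex ℝ ι) : ∃ j ≠ i, minCoord i y = y j := by
  obtain ⟨j, hj, hy⟩ := Finset.exists_mem_eq_inf' (erase_univ_nonempty i) fun j => y j
  exact ⟨j, Finset.ne_of_mem_erase hj, hy⟩

lemma moveToVertex_mem_stdSimplex (y : stdSimplex ℝ ι) {c : ℝ} (hc : 0 ≤ c)
    (hcy : c ≤ minCoord i y) :
    (fun j => y j + c * ((Pi.single i (Fintype.card ι : ℝ) : ι → ℝ) j - 1)) ∈ stdSimplex ℝ ι := by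
  refine ⟨fun j => ?_, ?_⟩
  · obtain rfl | hj := eq_or_ne j i
    · have hcard : (1 : ℝ) ≤ Fintype.card ι := mod_cast Fintype.card_pos
      have := stdSimplex.zero_le y j
      have := mul_nonneg hc (sub_nonneg.2 hcard)
      simp only [Pi.single_eq_same]
      linarith
    · have := hcy.trans (minCoord_le y hj)
      simp [hj]
      linarith
  · simp [Finset.sum_add_distrib, ← Finset.mul_sum, Finset.sum_sub_distrib]

variable (i) in
/-- The deformation of the simplex into the horn that decreases all coordinates other than the
`i`-th one at unit speed until one of them vanishes. -/
noncomputable def hornDeformation : MooreDeformation (topHorn i) where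
  length := minCoord i
  flow :=
    { toFun q := ⟨_, moveToVertex_mem_stdSimplex q.1 (le_max_left 0 (min q.2 (minCoord i q.1)))
        (max_le (minCoord_nonneg _) (min_le_right _ _))⟩
      continuous_toFun := by
        refine Continuous.subtype_mk (continuous_pi fun j => ?_) _
        have : Continuous fun q : stdSimplex ℝ ι × ℝ => q.1 j :=
          (continuous_apply j).comp (continuous_subtype_val.comp continuous_fst)
        fun_prop }
  length_nonneg := minCoord_nonneg
  length_eq_zero := by
    rintro y ⟨j, hj, hy⟩
    exact le_antisymm (hy ▸ minCoord_le y hj) (minCoord_nonneg y)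
  flow_zero y := by
    ext j
    change y j + max 0 (min 0 (minCoord i y)) * _ = y j
    simp [minCoord_nonneg]
  flow_length_mem y := by
    obtain ⟨j, hj, hy⟩ := exists_minCoord_eq (i := i) y
    refine ⟨j, hj, ?_⟩
    change y j + max 0 (min (minCoord i y) (minCoord i y)) * _ = 0
    simp [hy, hj]

end Horn

open unitInterval

variable {X : Type*} [TopologicalSpace X] {x₀ : X}

/-- The space of paths starting at `x₀`. -/
abbrev PathsFrom (x₀ : X) : Type _ := {γ : C(I, X) // γ 0 = x₀}

namespace MooreDeformation

/-- The end point in `S` of the path through a point of `T`. -/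
noncomputable def retraction (D : MooreDeformation S) : C(T, S) where
  toFun b := ⟨D.flow (b, D.length b), D.flow_length_mem b⟩
  continuous_toFun := by fun_prop

lemma retraction_apply (D : MooreDeformation S) (y : S) : D.retraction y.1 = y := by
  refine Subtype.ext ?_
  change D.flow (y.1, D.length y) = y
  rw [D.length_eq_zero y.2, D.flow_zero]

/-- The lifted path at `b` runs through the given path at the retraction of `b` and then follows
the deformation backwards to `b`, each at unit speed before rescaling. -/
theorem exists_path_lift (D : MooreDeformation S) (A : C(S, PathsFrom x₀)) (v : C(T, X))
    (hA : ∀ y : S, (A y).1 1 = v y) :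
    ∃ l : C(T, PathsFrom x₀), (∀ y : S, l y = A y) ∧ ∀ b, (l b).1 1 = v b := by
  let time (q : T × I) : ℝ := q.2 * (1 + D.length q.1)
  have continuous_time : Continuous time := by fun_prop
  let F : C(T × I, X) :=
    { toFun q :=
        if time q ≤ 1 then (A (D.retraction q.1)).1 (Set.projIcc 0 1 zero_le_one (time q))
        else v (D.flow (q.1, D.length q.1 - (time q - 1)))
      continuous_toFun := by
        refine Continuous.if_le ?_ (by fun_prop) continuous_time continuous_const fun q hq => ?_
        · have : Continuous fun q : T × I => (A (D.retraction q.1)).1 := by fun_prop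
          exact this.eval (continuous_projIcc.comp continuous_time)
        · rw [hq, Set.projIcc_right, sub_self, sub_zero]
          exact hA _ }
  have F_zero (b : T) : F (b, 0) = x₀ := by
    simpa [F, time] using (A (D.retraction b)).2
  refine ⟨⟨fun b => ⟨F.curry b, F_zero b⟩, by fun_prop⟩, fun y => ?_, fun b => ?_⟩
  · ext s
    simp [F, time, D.length_eq_zero y.2, D.retraction_apply, s.2.2]
  · obtain hb | hb := (D.length_nonneg b).eq_or_lt
    · have retraction_eq : (D.retraction b).1 = b := by
        change D.flow (b, D.length b) = b
        rw [← hb, D.flow_zero]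
      simp [F, time, ← hb, hA, retraction_eq]
    · simp [F, time, D.flow_zero, hb.not_ge]

end MooreDeformation

end MooreDeformation

section PathFibration

open unitInterval

/-- The path fibration of `X`, which sends a path starting at `x₀` to its end point. -/
def pathFibration (X : TopCat.{u}) (x₀ : X) : TopCat.of (PathsFrom x₀) ⟶ X :=
  TopCat.ofHom ⟨fun γ => γ.1 1, by fun_prop⟩

lemma yonedaEquiv_δ_comp {Y : SSet.{u}} {m : ℕ} (j : Fin (m + 2)) (g : Δ[m + 1] ⟶ Y) :
    yonedaEquiv (SSet.stdSimplex.δ j ≫ g) = Y.δ j (yonedaEquiv g) :=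
  (yonedaEquiv_naturality _ _).symm

/-- The continuous map on the facet opposite to the vertex `j` given by a horn in the singular
simplicial set of `X`. -/
noncomputable def singularHornFacet {X : TopCat.{u}} {m : ℕ} {i : Fin (m + 2)}
    (f : (Λ[m + 1, i] : SSet.{u}) ⟶ TopCat.toSSet.obj X) (j : Fin (m + 2)) (hj : j ≠ i) :
    C(_root_.stdSimplex ℝ (Fin (m + 1)), X) :=
  TopCat.toSSetObjEquiv X _ (yonedaEquiv (horn.ι i j hj ≫ f))

lemma singularHornFacet_eq {X : TopCat.{u}} {m : ℕ} {i : Fin (m + 2)}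
    (f : (Λ[m + 1, i] : SSet.{u}) ⟶ TopCat.toSSet.obj X) {j k : Fin (m + 2)} (hj : j ≠ i)
    (hk : k ≠ i) {z w : _root_.stdSimplex ℝ (Fin (m + 1))}
    (hzw : stdSimplex.map j.succAbove z = stdSimplex.map k.succAbove w) :
    singularHornFacet f j hj z = singularHornFacet f k hk w := by
  wlog hjk : j < k generalizing j k z w
  · obtain rfl | hkj := eq_or_lt_of_not_gt hjk
    · rw [stdSimplexMap_injective Fin.succAbove_right_injective hzw]
    · exact (this hk hj hzw.symm hkj).symm
  cases m with
  | zero => omega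
  | succ m =>
    obtain ⟨u, rfl, rfl⟩ := exists_common_face hjk hzw
    have h := congrArg yonedaEquiv ((horn.IsCompatible.of_hom f).δ_pred_comp j k hj hk hjk)
    rw [yonedaEquiv_δ_comp, yonedaEquiv_δ_comp] at h
    exact congrArg (fun s => TopCat.toSSetObjEquiv X (.op ⦋m⦌) s u) h

/-- The topological horn has the universal property of the realization of the simplicial one. -/
theorem exists_singularHorn_glue {X : TopCat.{u}} {m : ℕ} {i : Fin (m + 2)}
    (f : (Λ[m + 1, i] : SSet.{u}) ⟶ TopCat.toSSet.obj X) :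
    ∃ A : C(topHorn i, X), ∀ s, A (topHornFacets i s) = singularHornFacet f s.1.1 s.1.2 s.2 := by
  let a : C(Σ _ : {j // j ≠ i}, _root_.stdSimplex ℝ (Fin (m + 1)), X) :=
    ⟨fun s => singularHornFacet f s.1.1 s.1.2 s.2,
      continuous_sigma fun j => (singularHornFacet f j.1 j.2).continuous⟩
  have ha : Function.FactorsThrough a (topHornFacets i) :=
    fun s t hst => singularHornFacet_eq f s.1.2 t.1.2 (congrArg Subtype.val hst)
  exact ⟨(isQuotientMap_topHornFacets i).lift a ha,
    fun s => ContinuousMap.congr_fun ((isQuotientMap_topHornFacets i).lift_comp a ha) s⟩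

theorem hasLiftingProperty_horn_pathFibration (X : TopCat.{u}) (x₀ : X) {m : ℕ}
    (i : Fin (m + 2)) :
    HasLiftingProperty (Λ[m + 1, i].ι : _ ⟶ (Δ[m + 1] : SSet.{u}))
      (TopCat.toSSet.map (pathFibration X x₀)) where
  sq_hasLift {f g} sq := by
    obtain ⟨A, hA⟩ := exists_singularHorn_glue f
    let v : C(_root_.stdSimplex ℝ (Fin (m + 2)), X) := TopCat.toSSetObjEquiv X _ (yonedaEquiv g)
    have ev_facet (j : Fin (m + 2)) (hj : j ≠ i) (z) :
        (singularHornFacet f j hj z).1 1 = v (stdSimplex.map j.succAbove z) := by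
      have h := congrArg (fun k => yonedaEquiv (horn.ι i j hj ≫ k)) sq.w
      simp only [horn.ι_ι_assoc, yonedaEquiv_δ_comp] at h
      exact congrArg (fun s => TopCat.toSSetObjEquiv X _ s z) h
    obtain ⟨l, hlA, hlv⟩ := (hornDeformation i).exists_path_lift A v fun y => by
      obtain ⟨⟨j, z⟩, rfl⟩ := surjective_topHornFacets i y
      rw [hA, ev_facet]
      rfl
    refine ⟨⟨⟨yonedaEquiv.symm ((TopCat.toSSetObjEquiv _ (.op ⦋m + 1⦌)).symm l), ?_, ?_⟩⟩⟩
    · refine horn.hom_ext' fun j hj => ?_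
      rw [horn.ι_ι_assoc]
      apply yonedaEquiv.injective
      rw [yonedaEquiv_δ_comp, Equiv.apply_symm_apply]
      apply (TopCat.toSSetObjEquiv _ (.op ⦋m⦌)).injective
      ext z : 1
      exact (hlA _).trans (hA ⟨⟨j, hj⟩, z⟩)
    · rw [yonedaEquiv_symm_comp, Equiv.symm_apply_eq]
      apply (TopCat.toSSetObjEquiv X (.op ⦋m + 1⦌)).injective
      ext z : 1
      exact hlv z

instance fibration_pathFibration (X : TopCat.{u}) (x₀ : X) :
    Fibration (TopCat.toSSet.map (pathFibration X x₀)) := by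
  rw [modelCategoryQuillen.fibration_iff]
  intro A B i hi
  simp only [modelCategoryQuillen.J, MorphismProperty.iSup_iff] at hi
  obtain ⟨m, ⟨k⟩⟩ := hi
  exact hasLiftingProperty_horn_pathFibration _ x₀ k

/-- Since the path fibration of the realization `X` has the right lifting property against
`{e₀} ⟶ P`, it has a section; the paths in its image contract `X`. -/
theorem contractibleSpace_toTop {P : SSet.{u}} (e₀ : P _⦋0⦌)
    (h : anodyneExtensions (Subcomplex.ofSimplex e₀).ι) : ContractibleSpace (toTop.obj P) := by
  let X : TopCat.{u} := toTop.obj P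
  let η : P ⟶ TopCat.toSSet.obj X := sSetTopAdj.unit.app P
  let x₀ : X := TopCat.toSSetObj₀Equiv (η.app _ e₀)
  let const : TopCat.of (PathsFrom x₀) := (⟨ContinuousMap.const _ x₀, rfl⟩ : PathsFrom x₀)
  have sq : CommSq (SSet.const (TopCat.toSSetObj₀Equiv.symm const)) (Subcomplex.ofSimplex e₀).ι
      (TopCat.toSSet.map (pathFibration X x₀)) η := ⟨by
    rw [Subcomplex.ofSimplex_ι, SSet.const_comp, SSet.const_comp]
    exact congrArg SSet.const (TopCat.toSSetObj₀Equiv.injective rfl)⟩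
  have := h _ (mem_fibrations (TopCat.toSSet.map (pathFibration X x₀)))
  let c : X ⟶ TopCat.of (PathsFrom x₀) := (sSetTopAdj.homEquiv _ _).symm sq.lift
  have hc : c ≫ pathFibration X x₀ = 𝟙 X := by
    apply (sSetTopAdj.homEquiv _ _).injective
    rw [Adjunction.homEquiv_naturality_right, Equiv.apply_symm_apply, sq.fac_right,
      Adjunction.homEquiv_unit, TopCat.toSSet.map_id]
    exact (Category.comp_id _).symm
  have hc₁ : Continuous fun y => (c y).1 := continuous_subtype_val.comp c.hom.continuous
  refine (contractible_iff_id_nullhomotopic _).2 ⟨x₀, ⟨⟨⟨fun q => (c q.2).1 (σ q.1), ?_⟩, ?_, ?_⟩⟩⟩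
  · exact (hc₁.comp continuous_snd).eval (continuous_symm.comp continuous_fst)
  · intro y
    have hy : (c y).1 1 = y := ConcreteCategory.congr_hom hc y
    simpa using hy
  · intro y
    simpa using (c y).2

end PathFibration

section NondegenerateLetters

open scoped Classical

variable {A C : Type*} (s : C → A) (d : A → C)

/-- The image of a generator in the free group on the generators outside the range of `s`. -/
noncomputable def nondegLetter (a : A) : FreeGroup {a // a ∉ Set.range s} :=
  if h : a ∈ Set.range s then 1 else FreeGroup.of ⟨a, h⟩

/-- In the tree with edges the pairs `(w, a)` joining the vertices `w` and `(a w, d a)`: the label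
`a` of the edge leading from `w` towards the root `(1, b₀)`. -/
noncomputable def parentLabel (b₀ : C) (w : FreeGroup {a // a ∉ Set.range s}) : A :=
  match w.toWord[0]? with
  | none => s b₀
  | some (a, false) => a.1
  | some (a, true) => s (d a.1)

lemma nondegLetter_apply (c : C) : nondegLetter s (s c) = 1 :=
  dif_pos ⟨c, rfl⟩

lemma nondegLetter_of_notMem {a : A} (ha : a ∉ Set.range s) :
    nondegLetter s a = FreeGroup.of ⟨a, ha⟩ :=
  dif_neg ha

lemma parentLabel_of_mem_startsWith_false (b₀ : C) {w : FreeGroup {a // a ∉ Set.range s}}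
    {a : {a // a ∉ Set.range s}} (h : w ∈ FreeGroup.startsWith (a, false)) :
    parentLabel s d b₀ w = a := by
  rw [FreeGroup.startsWith, Set.mem_ofPred_eq] at h
  simp only [parentLabel, h]

lemma parentLabel_of_mem_startsWith_true (b₀ : C) {w : FreeGroup {a // a ∉ Set.range s}}
    {a : {a // a ∉ Set.range s}} (h : w ∈ FreeGroup.startsWith (a, true)) :
    parentLabel s d b₀ w = s (d a) := by
  rw [FreeGroup.startsWith, Set.mem_ofPred_eq] at h
  simp only [parentLabel, h]

lemma parentLabel_eq_or_mem_startsWith (b₀ : C) (w : FreeGroup {a // a ∉ Set.range s})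
    (a : {a // a ∉ Set.range s}) :
    parentLabel s d b₀ w = a ∨ FreeGroup.of a * w ∈ FreeGroup.startsWith (a, true) :=
  or_iff_not_imp_left.2 fun h =>
    FreeGroup.startsWith_mk_mul w fun hw => h (parentLabel_of_mem_startsWith_false s d b₀ hw)

variable {s d} (hds : Function.LeftInverse d s)
include hds

lemma parentLabel_eq_of_nondegLetter_mul_eq_one {b₀ : C} {w : FreeGroup {a // a ∉ Set.range s}}
    {a : A} (h : nondegLetter s a * w = 1) (ha : d a = b₀) : parentLabel s d b₀ w = a := by
  by_cases hs : a ∈ Set.range s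
  · obtain ⟨c, rfl⟩ := hs
    rw [nondegLetter_apply, one_mul] at h
    simp [parentLabel, h, ← ha, hds c]
  · rw [nondegLetter_of_notMem s hs, mul_eq_one_iff_inv_eq] at h
    refine parentLabel_of_mem_startsWith_false s d b₀ (a := ⟨a, hs⟩) ?_
    rw [← h, ← mul_one (FreeGroup.of _)⁻¹]
    exact FreeGroup.startsWith_mk_mul 1 fun h₁ => FreeGroup.startsWith.ne_one 1 h₁ rfl

lemma parentLabel_of_mem_range (b₀ : C) {w w' : FreeGroup {a // a ∉ Set.range s}} {a a' : A}
    (h : nondegLetter s a * w = nondegLetter s a' * w') (hd : d a = d a') (ha : a ∈ Set.range s) :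
    a = a' ∨ parentLabel s d b₀ w = a ∨ parentLabel s d b₀ w' = a' := by
  obtain ⟨c, rfl⟩ := ha
  by_cases ha' : a' ∈ Set.range s
  · obtain ⟨c', rfl⟩ := ha'
    rw [hds, hds] at hd
    exact Or.inl (congrArg s hd)
  · rw [nondegLetter_apply, one_mul, nondegLetter_of_notMem s ha'] at h
    obtain hw' | hw := parentLabel_eq_or_mem_startsWith s d b₀ w' ⟨a', ha'⟩
    · exact Or.inr (Or.inr hw')
    · refine Or.inr (Or.inl ?_)
      rw [parentLabel_of_mem_startsWith_true s d b₀ (h ▸ hw), ← hd, hds]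

theorem eq_or_parentLabel (b₀ : C) {w w' : FreeGroup {a // a ∉ Set.range s}} {a a' : A}
    (h : nondegLetter s a * w = nondegLetter s a' * w') (hd : d a = d a') :
    a = a' ∨ parentLabel s d b₀ w = a ∨ parentLabel s d b₀ w' = a' := by
  by_cases ha : a ∈ Set.range s
  · exact parentLabel_of_mem_range hds b₀ h hd ha
  by_cases ha' : a' ∈ Set.range s
  · obtain e | hw' | hw := parentLabel_of_mem_range hds b₀ h.symm hd.symm ha'
    exacts [Or.inl e.symm, Or.inr (Or.inr hw'), Or.inr (Or.inl hw)]
  rw [nondegLetter_of_notMem s ha, nondegLetter_of_notMem s ha'] at h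
  obtain hw | hw := parentLabel_eq_or_mem_startsWith s d b₀ w ⟨a, ha⟩
  · exact Or.inr (Or.inl hw)
  obtain hw' | hw' := parentLabel_eq_or_mem_startsWith s d b₀ w' ⟨a', ha'⟩
  · exact Or.inr (Or.inr hw')
  · have same_letter := FreeGroup.startsWith.disjoint_iff_ne.not_left.1
      (Set.not_disjoint_iff.2 ⟨_, h ▸ hw, hw'⟩)
    simp_all

end NondegenerateLetters

section PresentedGroup

variable {A G : Type*} [Group G]

lemma closure_range_of_presentedGroup {rels : Set (FreeGroup A)} (ψ : PresentedGroup rels ≃* G) :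
    Subgroup.closure (Set.range fun a => ψ (PresentedGroup.of a)) = ⊤ := by
  rw [Set.range_comp' ψ, ← MulEquiv.coe_toMonoidHom, ← MonoidHom.map_closure,
    PresentedGroup.closure_range_of]
  exact Subgroup.map_top_of_surjective ψ.toMonoidHom ψ.surjective

/-- Killing the generators in the range of `s` leaves a free group on the other ones. -/
lemma exists_hom_nondegLetter {C : Type*} {s : C → A}
    (ψ : PresentedGroup (Set.range fun c => FreeGroup.of (s c)) ≃* G) :
    ∃ θ : G →* FreeGroup {a // a ∉ Set.range s},
      ∀ a, θ (ψ (PresentedGroup.of a)) = nondegLetter s a := by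
  have relations : ∀ r ∈ Set.range fun c => FreeGroup.of (s c),
      FreeGroup.lift (nondegLetter s) r = 1 := by
    rintro _ ⟨c, rfl⟩
    rw [FreeGroup.lift_apply_of, nondegLetter_apply]
  exact ⟨(PresentedGroup.toGroup relations).comp ψ.symm, fun a => by simp⟩

end PresentedGroup

section Decalage

open SSet.Augmented (StandardSimplex.shift)

lemma map_op_map_op (X : SSet.{u}) {a b c : SimplexCategory} {φ : a ⟶ b} {ψ : b ⟶ c} {χ : a ⟶ c}
    (h : φ ≫ ψ = χ) (x : X.obj (.op c)) : X.map φ.op (X.map ψ.op x) = X.map χ.op x := by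
  rw [← h, op_comp, X.map_comp]
  rfl

lemma simplexCategory_hom_ext_succ {n : ℕ} {a : SimplexCategory} {φ ψ : ⦋n + 1⦌ ⟶ a}
    (h₀ : φ 0 = ψ 0) (h : ∀ i : Fin (n + 1), φ i.succ = ψ i.succ) : φ = ψ := by
  ext i : 3
  cases i using Fin.cases with
  | zero => exact h₀
  | succ i => exact h i

/-- The endofunctor of the simplex category which adjoins a new least element. -/
def shiftFunctor : SimplexCategory ⥤ SimplexCategory where
  obj a := ⦋a.len + 1⦌
  map φ := StandardSimplex.shift (φ ≫ SimplexCategory.δ 0)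
  map_id _ := simplexCategory_hom_ext_succ rfl fun _ => rfl
  map_comp _ _ := simplexCategory_hom_ext_succ rfl fun _ => rfl

lemma shiftFunctor_map_δ {n : ℕ} (i : Fin (n + 2)) :
    shiftFunctor.map (SimplexCategory.δ i) = SimplexCategory.δ i.succ :=
  simplexCategory_hom_ext_succ rfl fun j => (Fin.succ_succAbove_succ i j).symm

lemma shiftFunctor_map_σ {n : ℕ} (i : Fin (n + 1)) :
    shiftFunctor.map (SimplexCategory.σ i) = SimplexCategory.σ i.succ :=
  simplexCategory_hom_ext_succ rfl fun j => (Fin.succ_predAbove_succ i j).symm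

/-- The endomorphism of `⦋n + 1⦌` which moves the preimage of `0` under `t : ⦋n⦌ ⟶ ⦋1⦌` to the
adjoined least element. -/
def shiftContraction {a : SimplexCategory} (t : a ⟶ ⦋1⦌) :
    shiftFunctor.obj a ⟶ shiftFunctor.obj a :=
  StandardSimplex.shift <| SimplexCategory.Hom.mk
    { toFun := fun i => if t i = 0 then 0 else i.succ
      monotone' := by
        intro i j hij
        have ht : t i ≤ t j := t.toOrderHom.monotone hij
        change (if t i = 0 then 0 else i.succ) ≤ if t j = 0 then 0 else j.succ
        split_ifs with hi hj hj
        · exact le_rfl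
        · exact Fin.zero_le _
        · exact absurd (le_antisymm (hj ▸ ht) (Fin.zero_le _)) hi
        · exact Fin.succ_le_succ_iff.2 hij }

lemma shiftContraction_naturality {a b : SimplexCategory} (φ : a ⟶ b) (t : b ⟶ ⦋1⦌) :
    shiftFunctor.map φ ≫ shiftContraction t =
      shiftContraction (φ ≫ t) ≫ shiftFunctor.map φ := by
  refine simplexCategory_hom_ext_succ rfl fun i => ?_
  exact (apply_ite (shiftFunctor.map φ) (t (φ i) = 0) 0 i.succ).symm

/-- The décalage of `K`, whose `n`-simplices are the `(n + 1)`-simplices of `K`. -/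
def dec (K : SSet.{u}) : SSet.{u} := shiftFunctor.op ⋙ K

/-- The contraction of the décalage of `K` onto the vertices of `K`. -/
def decHtpy (K : SSet.{u}) : dec K ⊗ Δ[1] ⟶ dec K where
  app n := ↾fun x => K.map (shiftContraction (SSet.stdSimplex.objEquiv x.2)).op x.1
  naturality n m φ := by
    ext x
    exact (map_op_map_op K (shiftContraction_naturality φ.unop _).symm x.1).trans
      (map_op_map_op K rfl x.1).symm

lemma cylinderEnd_one_decHtpy (K : SSet.{u}) : cylinderEnd 1 ≫ decHtpy K = 𝟙 (dec K) := by
  ext n x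
  have contraction_one : shiftContraction (SimplexCategory.const n.unop ⦋1⦌ 1) = 𝟙 _ :=
    simplexCategory_hom_ext_succ rfl fun _ => rfl
  exact ConcreteCategory.congr_hom
    ((K.congr_map (congrArg Quiver.Hom.op contraction_one)).trans (K.map_id _)) x

lemma cylinderEnd_zero_decHtpy (K : SSet.{u}) [Subsingleton (K _⦋0⦌)] (k₀ : K _⦋0⦌) :
    cylinderEnd 0 ≫ decHtpy K = SSet.const (X := dec K) (K.σ 0 k₀) := by
  ext n x
  let toPoint : shiftFunctor.obj n.unop ⟶ ⦋0⦌ := SimplexCategory.const _ _ 0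
  let vertex : ⦋0⦌ ⟶ shiftFunctor.obj n.unop := SimplexCategory.const _ _ 0
  have contraction_zero : shiftContraction (SimplexCategory.const n.unop ⦋1⦌ 0) =
      toPoint ≫ vertex :=
    simplexCategory_hom_ext_succ rfl fun _ => rfl
  have shift_comp_σ : shiftFunctor.map (SimplexCategory.const n.unop ⦋0⦌ 0) ≫
      SimplexCategory.σ 0 = toPoint := Subsingleton.elim _ _
  calc K.map (shiftContraction (SimplexCategory.const n.unop ⦋1⦌ 0)).op x
    _ = K.map toPoint.op (K.map vertex.op x) := (map_op_map_op K contraction_zero.symm x).symm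
    _ = K.map toPoint.op k₀ := congrArg _ (Subsingleton.elim _ _)
    _ = K.map (shiftFunctor.map (SimplexCategory.const n.unop ⦋0⦌ 0)).op (K.σ 0 k₀) :=
      (map_op_map_op K shift_comp_σ k₀).symm

end Decalage

/-- The fibrewise contraction of a projection given by a contraction of the fibre `D`. -/
def FiberwiseContraction.fst (Y : SSet.{u}) {D : SSet.{u}} {d₀ : D _⦋0⦌} {h : D ⊗ Δ[1] ⟶ D}
    (h₀ : cylinderEnd 0 ≫ h = SSet.const d₀) (h₁ : cylinderEnd 1 ≫ h = 𝟙 D) :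
    FiberwiseContraction (CartesianMonoidalCategory.fst Y D) where
  sec := CartesianMonoidalCategory.lift (𝟙 Y) (SSet.const d₀)
  htpy := (α_ Y D Δ[1]).hom ≫ Y ◁ h
  sec_comp := rfl
  htpy_comp := rfl
  htpy_zero := CartesianMonoidalCategory.hom_ext _ _ rfl
    (CartesianMonoidalCategory.snd Y D ≫= h₀)
  htpy_one := CartesianMonoidalCategory.hom_ext _ _ rfl
    (CartesianMonoidalCategory.snd Y D ≫= h₁)

section TotalSpace

variable {K : SSet.{0}} {GK : SimplicialObject GrpCat.{0}} {ζ : TwistingFunction K GK}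
  {P : SSet.{0}} {p : P ⟶ K}

lemma map_δHom_zero_twist {n : ℕ} (g : (GK _⦋n + 1⦌ : Type)) (x : K _⦋n + 2⦌) :
    ζ.map n (K.δ 1 x) * δHom GK 0 g = ζ.map n (K.δ 0 x) * δHom GK 0 (ζ.map (n + 1) x * g) := by
  have hζ : δHom GK 0 (ζ.map (n + 1) x) = (ζ.map n (K.δ 0 x))⁻¹ * ζ.map n (K.δ 1 x) :=
    ζ.map_δ₀ n x
  rw [map_mul, hζ, mul_assoc, mul_inv_cancel_left]

lemma δ_zero_σ_zero {n : ℕ} (c : K _⦋n⦌) : K.δ 0 (K.σ 0 c) = c :=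
  ConcreteCategory.congr_hom (K.δ_comp_σ_self (i := (0 : Fin (n + 1)))) c

namespace TCP

variable (T : TCP GK (uSSet GK) K (leftMulAction GK) ζ P p)
include T

/-- The map `(g, x) ↦ (τ(x) g, ∂₀ x)` in degree `n`. -/
def decFun {n : ℕ} (g : (GK _⦋n⦌ : Type)) (x : K _⦋n + 1⦌) : P _⦋n⦌ :=
  (T.e n).symm ((ζ.map n x * g : (GK _⦋n⦌ : Type)), K.δ 0 x)

lemma e_decFun {n : ℕ} (g : (GK _⦋n⦌ : Type)) (x : K _⦋n + 1⦌) :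
    T.e n (T.decFun g x) = ((ζ.map n x * g : (GK _⦋n⦌ : Type)), K.δ 0 x) :=
  (T.e n).apply_symm_apply _

lemma decFun_eq_iff {n : ℕ} {g g' : (GK _⦋n⦌ : Type)} {x x' : K _⦋n + 1⦌} :
    T.decFun g x = T.decFun g' x' ↔
      ζ.map n x * g = ζ.map n x' * g' ∧ K.δ 0 x = K.δ 0 x' :=
  (T.e n).symm.injective.eq_iff.trans Prod.ext_iff

lemma decFun_twist_mul {n : ℕ} (x : K _⦋n + 1⦌) (g : (GK _⦋n⦌ : Type)) :
    T.decFun (ζ.map n x * g : (GK _⦋n⦌ : Type)) (K.σ 0 (K.δ 0 x)) = T.decFun g x := by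
  rw [decFun_eq_iff, ζ.map_σ₀, one_mul, δ_zero_σ_zero]
  exact ⟨rfl, rfl⟩

lemma decFun_σ_zero {n : ℕ} (e : P _⦋n⦌) :
    T.decFun (T.e n e).1 (K.σ 0 (T.e n e).2) = e := by
  refine (T.e n).symm_apply_eq.2 (Prod.ext ?_ (δ_zero_σ_zero _))
  exact (congrArg ((leftMulAction GK).act n · _) (ζ.map_σ₀ n _)).trans
    ((leftMulAction GK).one_act n _)

lemma decFun_δ {n : ℕ} (i : Fin (n + 2)) (g : (GK _⦋n + 1⦌ : Type)) (x : K _⦋n + 2⦌) :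
    T.decFun (δHom GK i g) (K.δ i.succ x) = P.δ i (T.decFun g x) := by
  refine (T.e n).symm_apply_eq.2 ?_
  induction i using Fin.cases with
  | zero =>
    rw [T.e_δ₀, e_decFun]
    exact Prod.ext (map_δHom_zero_twist g x)
      (ConcreteCategory.congr_hom (K.δ_comp_δ_self (i := (0 : Fin (n + 2)))) x).symm
  | succ j =>
    rw [T.e_δ, e_decFun]
    refine Prod.ext ?_ (ConcreteCategory.congr_hom (K.δ_comp_δ (Fin.zero_le j.succ)) x)
    exact (congrArg (· * _) (ζ.map_δ n j x)).symm.trans (map_mul (δHom GK j.succ) _ g).symm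

lemma decFun_σ {n : ℕ} (i : Fin (n + 1)) (g : (GK _⦋n⦌ : Type)) (x : K _⦋n + 1⦌) :
    T.decFun (σHom GK i g) (K.σ i.succ x) = P.σ i (T.decFun g x) := by
  refine (T.e (n + 1)).symm_apply_eq.2 ?_
  rw [T.e_σ, e_decFun]
  refine Prod.ext ?_ (ConcreteCategory.congr_hom (K.δ_comp_σ_of_le (Fin.zero_le i.castSucc)) x)
  exact (congrArg (· * _) (ζ.map_σ n i x)).symm.trans (map_mul (σHom GK i) _ g).symm

lemma decFun_map {a b : SimplexCategory} (φ : a ⟶ b) (g : (GK.obj (.op b) : Type))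
    (x : (dec K).obj (.op b)) :
    T.decFun ((GK.map φ.op).hom g) ((dec K).map φ.op x) = P.map φ.op (T.decFun g x) := by
  let natural : MorphismProperty SimplexCategory := fun a b φ =>
    ∀ (g : (GK.obj (.op b) : Type)) (x : (dec K).obj (.op b)),
      T.decFun ((GK.map φ.op).hom g) ((dec K).map φ.op x) = P.map φ.op (T.decFun g x)
  have : natural.IsMultiplicative :=
    { id_mem := fun a g x => by simp [op_id]
      comp_mem := fun φ ψ hφ hψ g x => by
        rw [op_comp, GK.map_comp, (dec K).map_comp, P.map_comp]
        exact (hφ _ _).trans (congrArg _ (hψ g x)) }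
  have natural_eq_top : natural = ⊤ := by
    refine SimplexCategory.morphismProperty_eq_top _ ?_ ?_
    · intro n i g x
      exact (congrArg (fun χ => T.decFun (δHom GK i g) (K.map (Quiver.Hom.op χ) x))
        (shiftFunctor_map_δ i)).trans (T.decFun_δ i g x)
    · intro n i g x
      exact (congrArg (fun χ => T.decFun (σHom GK i g) (K.map (Quiver.Hom.op χ) x))
        (shiftFunctor_map_σ i)).trans (T.decFun_σ i g x)
  exact (natural_eq_top ▸ MorphismProperty.top_apply φ : natural φ) g x

/-- The simplicial map `(g, x) ↦ (τ(x) g, ∂₀ x)` from `G × Dec K` to the twisted product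
`G ×_τ K`. -/
def decMap : uSSet GK ⊗ dec K ⟶ P where
  app n := ↾fun c => T.decFun (n := n.unop.len) c.1 c.2
  naturality n m φ := by
    ext c
    exact T.decFun_map φ.unop c.1 c.2

/-- The vertex `(1, k₀)` of the twisted product. -/
def vertex (k₀ : K _⦋0⦌) : P _⦋0⦌ := (T.e 0).symm ((1 : (GK _⦋0⦌ : Type)), k₀)

lemma e_map_vertex (k₀ : K _⦋0⦌) {n : ℕ} (φ : ⦋n⦌ ⟶ ⦋0⦌) :
    T.e n (P.map φ.op (T.vertex k₀)) = ((1 : (GK _⦋n⦌ : Type)), K.map φ.op k₀) := by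
  induction n with
  | zero =>
    rw [Subsingleton.elim φ (𝟙 _), op_id, P.map_id, K.map_id]
    exact (T.e 0).apply_symm_apply _
  | succ n ih =>
    let φ' : ⦋n⦌ ⟶ ⦋0⦌ := SimplexCategory.const _ _ 0
    have hφ : SimplexCategory.σ 0 ≫ φ' = φ := Subsingleton.elim _ _
    rw [← map_op_map_op P hφ, ← map_op_map_op K hφ]
    refine (T.e_σ n 0 _).trans ?_
    rw [ih φ']
    exact Prod.ext (map_one (σHom GK 0)) rfl

lemma decFun_mem_ofSimplex_vertex_iff {k₀ : K _⦋0⦌} {n : ℕ} {g : (GK _⦋n⦌ : Type)}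
    {x : K _⦋n + 1⦌} :
    T.decFun g x ∈ (Subcomplex.ofSimplex (T.vertex k₀)).obj (.op ⦋n⦌) ↔
      ζ.map n x * g = 1 ∧ K.δ 0 x = K.map (SimplexCategory.const ⦋n⦌ ⦋0⦌ 0).op k₀ := by
  have mem_iff : T.decFun g x ∈ (Subcomplex.ofSimplex (T.vertex k₀)).obj (.op ⦋n⦌) ↔
      P.map (SimplexCategory.const ⦋n⦌ ⦋0⦌ 0).op (T.vertex k₀) = T.decFun g x := by
    rw [Subcomplex.mem_ofSimplex_obj_iff]
    refine ⟨?_, fun h => ⟨_, h⟩⟩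
    rintro ⟨φ, hφ⟩
    rwa [Subsingleton.elim φ (SimplexCategory.const ⦋n⦌ ⦋0⦌ 0)] at hφ
  rw [mem_iff, eq_comm, ← (T.e n).injective.eq_iff, e_decFun, e_map_vertex]
  exact Prod.ext_iff

end TCP

/-- The edge `(g, x)` of the tree with vertices `Gₙ ⊔ Pₙ` which leads from `g : Gₙ` towards the
root `(1, k₀)`. -/
noncomputable def parentEdge (k₀ : K _⦋0⦌)
    (θ : ∀ n, (GK _⦋n⦌ : Type) →* FreeGroup {a // a ∉ Set.range fun c : K _⦋n⦌ => K.σ 0 c})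
    {n : SimplexCategoryᵒᵖ} (g : (uSSet GK).obj n) : (uSSet GK ⊗ dec K).obj n :=
  (g, parentLabel (fun c : K _⦋n.unop.len⦌ => K.σ 0 c) (fun x => K.δ 0 x)
    (K.map (SimplexCategory.const ⦋n.unop.len⦌ ⦋0⦌ 0).op k₀) (θ n.unop.len g))

lemma map_twist_mul
    {θ : ∀ n, (GK _⦋n⦌ : Type) →* FreeGroup {a // a ∉ Set.range fun c : K _⦋n⦌ => K.σ 0 c}}
    (hθ : ∀ n x, θ n (ζ.map n x) = nondegLetter (fun c : K _⦋n⦌ => K.σ 0 c) x)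
    {n : ℕ} (x : K _⦋n + 1⦌) (g : (GK _⦋n⦌ : Type)) :
    θ n (ζ.map n x * g) = nondegLetter (fun c : K _⦋n⦌ => K.σ 0 c) x * θ n g := by
  rw [map_mul, hθ]

namespace TCP

variable (T : TCP GK (uSSet GK) K (leftMulAction GK) ζ P p)

theorem isRootedForest (k₀ : K _⦋0⦌)
    {θ : ∀ n, (GK _⦋n⦌ : Type) →* FreeGroup {a // a ∉ Set.range fun c : K _⦋n⦌ => K.σ 0 c}}
    (hθ : ∀ n x, θ n (ζ.map n x) = nondegLetter (fun c : K _⦋n⦌ => K.σ 0 c) x) :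
    IsRootedForest (CartesianMonoidalCategory.fst (uSSet GK) (dec K)) T.decMap
      (Subcomplex.ofSimplex (T.vertex k₀)) (parentEdge k₀ θ) where
  parent_of_mem_root := by
    rintro n ⟨g, x⟩ hb
    obtain ⟨hg, hx⟩ := T.decFun_mem_ofSimplex_vertex_iff.1 hb
    have hw := (map_twist_mul hθ x g).symm.trans ((congrArg (θ _) hg).trans (map_one _))
    exact Prod.ext rfl (parentLabel_eq_of_nondegLetter_mul_eq_one δ_zero_σ_zero hw hx)
  injective := by
    rintro n ⟨g, x⟩ ⟨g', x'⟩ hb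
    obtain ⟨hg, hx⟩ := T.decFun_eq_iff.1 hb
    have hw := (map_twist_mul hθ x g).symm.trans
      ((congrArg (θ _) hg).trans (map_twist_mul hθ x' g'))
    obtain rfl | h | h := eq_or_parentLabel δ_zero_σ_zero
      (K.map (SimplexCategory.const ⦋n.unop.len⦌ ⦋0⦌ 0).op k₀) hw hx
    · exact Or.inl (Prod.ext (mul_left_cancel (G := GK _⦋n.unop.len⦌) hg) rfl)
    · exact Or.inr (Or.inl (Prod.ext rfl h))
    · exact Or.inr (Or.inr (Prod.ext rfl h))

theorem iSup_forestLayer_eq_top (k₀ : K _⦋0⦌)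
    (hζ : ∀ n, Subgroup.closure (Set.range (ζ.map n)) = ⊤) :
    ⨆ k, forestLayer (CartesianMonoidalCategory.fst (uSSet GK) (dec K)) T.decMap
      (Subcomplex.ofSimplex (T.vertex k₀)) k = ⊤ := by
  let f := CartesianMonoidalCategory.fst (uSSet GK) (dec K)
  let E₀ := Subcomplex.ofSimplex (T.vertex k₀)
  have mem_of_decFun_eq {n k : ℕ} {g g' : (GK _⦋n⦌ : Type)} {x x' : K _⦋n + 1⦌}
      (h : T.decFun g x = T.decFun g' x')
      (hg : g ∈ (forestInnerLayer f T.decMap E₀ (k + 1)).obj (.op ⦋n⦌)) :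
      g' ∈ (forestInnerLayer f T.decMap E₀ (k + 2)).obj (.op ⦋n⦌) := by
    have hP := mem_forestLayer_succ (f := f) (π := T.decMap) (b := (g, x)) hg
    exact mem_forestInnerLayer_succ (f := f) (π := T.decMap) (b := (g', x'))
      ((congrArg (· ∈ (forestLayer f T.decMap E₀ (k + 1)).obj (.op ⦋n⦌)) h).mp hP)
  have exists_mem (n : ℕ) (g : (GK _⦋n⦌ : Type)) :
      ∃ k, g ∈ (forestInnerLayer f T.decMap E₀ (k + 1)).obj (.op ⦋n⦌) := by
    let base : K _⦋n⦌ := K.map (SimplexCategory.const ⦋n⦌ ⦋0⦌ 0).op k₀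
    induction hζ n ▸ Subgroup.mem_top g using Subgroup.closure_induction_left with
    | one =>
      have root_mem := T.decFun_mem_ofSimplex_vertex_iff.2
        ⟨(mul_one _).trans (ζ.map_σ₀ n base), δ_zero_σ_zero base⟩
      exact ⟨0, mem_forestInnerLayer_succ (f := f) (b := ((1 : (GK _⦋n⦌ : Type)), K.σ 0 base))
        root_mem⟩
    | mul_left _ hx g _ ih =>
      obtain ⟨x, rfl⟩ := hx
      obtain ⟨k, hk⟩ := ih
      exact ⟨k + 1, mem_of_decFun_eq (T.decFun_twist_mul x g).symm hk⟩
    | inv_mul_cancel _ hx g _ ih =>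
      obtain ⟨x, rfl⟩ := hx
      obtain ⟨k, hk⟩ := ih
      have e := T.decFun_twist_mul x ((ζ.map n x)⁻¹ * g)
      rw [mul_inv_cancel_left] at e
      exact ⟨k + 1, mem_of_decFun_eq e hk⟩
  refine top_unique fun n e _ => ?_
  obtain ⟨k, hk⟩ := exists_mem n.unop.len (T.e n.unop.len e).1
  rw [Subfunctor.iSup_obj, Set.mem_iUnion]
  have he := mem_forestLayer_succ (f := f) (π := T.decMap)
    (b := ((T.e _ e).1, K.σ 0 (T.e _ e).2)) hk
  exact ⟨k + 1, (congrArg (· ∈ _) (T.decFun_σ_zero e)).mp he⟩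

end TCP

end TotalSpace

end HopfModel

open HopfModel in
/-- Let `K` be a reduced simplicial set (exactly one `0`-simplex), and let
`GK` be (a simplicial group isomorphic to) the loop group `G(K)` — i.e. each `GKₙ` is the
free group on `K_{n+1}` modulo `s₀x = e` and the canonical map `τ = ζ` is a twisting
function. Then the principal twisted cartesian product `G(K) ×_τ K` is acyclic: its
geometric realization is weakly contractible (nonempty, with all homotopy groups trivial). -/
theorem ptcp_loopGrp_weakly_contractible
    (K : SSet.{0}) (hK₀ : Nonempty (K _⦋0⦌)) (hK₀' : Subsingleton (K _⦋0⦌))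
    (GK : SimplicialObject GrpCat) (ζ : TwistingFunction K GK)
    (ψ : ∀ n : ℕ, PresentedGroup (loopRels K n) ≃* (GK _⦋n⦌ : Type))
    (hψ : ∀ (n : ℕ) (x : K _⦋n + 1⦌), ψ n (PresentedGroup.of x) = ζ.map n x)
    (P : SSet) (p : P ⟶ K) (T : TCP GK (uSSet GK) K (leftMulAction GK) ζ P p) :
    Nonempty (SSet.toTop.obj P) ∧
    ∀ (n : ℕ) (x : SSet.toTop.obj P),
      Subsingleton (HomotopyGroup (Fin n) (SSet.toTop.obj P) x) := by
  obtain ⟨k₀⟩ := hK₀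
  choose θ hθ using fun n => exists_hom_nondegLetter (s := fun c : K _⦋n⦌ => K.σ 0 c) (ψ n)
  have generates (n : ℕ) : Subgroup.closure (Set.range (ζ.map n)) = ⊤ := by
    rw [← funext (hψ n)]
    exact closure_range_of_presentedGroup (ψ n)
  have forest := T.isRootedForest k₀ fun n x => (congrArg (θ n) (hψ n x)).symm.trans (hθ n x)
  have anodyne := forest.anodyneExtensions
    (.fst _ (cylinderEnd_zero_decHtpy K k₀) (cylinderEnd_one_decHtpy K))
    (T.iSup_forestLayer_eq_top k₀ generates)
  have := contractibleSpace_toTop (T.vertex k₀) anodyne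
  exact ⟨inferInstance, fun n x => subsingleton_homotopyGroup x⟩
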